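/- Define Φ₁₀ : [0,π] → ℝ by Φ₁₀(x) := (4/π) Σ_{k=1}^∞ [2k(4k² − 13)/(1 − 4k²)³] sin(2kx). Then the series converges, Φ₁₀ is twice continuously differentiable on [0,π], Φ₁₀(0) = Φ₁₀(π) = 0, ∫₀^π Φ₁₀(x) sin(x) dx = 0, and Φ₁₀''(x) + Φ₁₀(x) = cos(x) − 3(π − 2x) sin(x) for all x ∈ (0,π). -/

import Mathlib

open Set Real

noncomputable section

/-- The `k`-th Fourier coefficient in the series defining `Φ₁₀`. -/
def phiCoeff (k : ℕ) : ℝ := 2 * (k:ℝ) * (4 * (k:ℝ)^2 - 13) / (1 - 4 * (k:ℝ)^2)^3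

/-- `Φ₁₀(x) = (4/π) Σ_{k=1}^∞ [2k(4k²−13)/(1−4k²)³] sin(2kx)`. -/
def Phi10 (x : ℝ) : ℝ :=
  (4/π) * ∑' k : ℕ, phiCoeff (k + 1) * Real.sin (2 * ((k:ℝ) + 1) * x)

def phiF (x : ℝ) : ℝ := (2 * x - π) * Real.sin x + 3 / 2 * (x * (π - x)) * Real.cos x

lemma one_sub_ne (n : ℤ) : (1 - 4 * (n:ℝ)^2) ≠ 0 := by
  have : (1 - 4 * n^2 : ℤ) ≠ 0 := by omega
  exact_mod_cast this

lemma integral_aux (l : ℂ) (hD : l^2 + 1 ≠ 0) (hl : Complex.exp (l * π) = 1) :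
    ∫ x in (0:ℝ)..π, Complex.exp (l * x) * (phiF x : ℂ) =
      -2 * l * (l^2 + 13) / (1 + l^2)^3 := by
  obtain ⟨D, hDe⟩ : ∃ D, D = l^2 + 1 := ⟨_, rfl⟩
  rw [← hDe] at hD
  obtain ⟨a2, h2⟩ : ∃ a2 : ℂ, D * a2 = -3/2 := ⟨(-3/2)/D, by field_simp⟩
  obtain ⟨a1, h1⟩ : ∃ a1 : ℂ, D * a1 = 3 * π / 2 + 2 * l - 4 * l * a2 :=
    ⟨(3 * π / 2 + 2 * l - 4 * l * a2)/D, by field_simp⟩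
  obtain ⟨a0, h0⟩ : ∃ a0 : ℂ, D * a0 = 2 - l * π - 2 * l * a1 - 2 * a2 :=
    ⟨(2 - l * π - 2 * l * a1 - 2 * a2)/D, by field_simp⟩
  let H : ℂ → ℂ := fun x => Complex.exp (l * x) * ((a2 * x^2 + a1 * x + a0) * Complex.sin x +
    (2 * a2 * x + a1 + l * (a2 * x^2 + a1 * x + a0) - (2 * x - π)) * Complex.cos x)
  have hH : ∀ x : ℝ, HasDerivAt (fun y : ℝ => H y) (Complex.exp (l * x) * (phiF x : ℂ)) x := by
    intro x
    apply HasDerivAt.comp_ofReal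
    have i := hasDerivAt_id (x : ℂ)
    have e := (i.const_mul l).cexp
    have s := Complex.hasDerivAt_sin (x : ℂ)
    have c := Complex.hasDerivAt_cos (x : ℂ)
    have P := (((i.pow 2).const_mul a2).add (i.const_mul a1)).add_const a0
    have Q := ((((i.const_mul (2 * a2)).add_const a1).add (P.const_mul l))).sub
      ((i.const_mul 2).sub_const (π:ℂ))
    have := e.mul ((P.mul s).add (Q.mul c))
    refine HasDerivAt.congr_deriv this ?_
    simp [phiF]
    subst hDe
    linear_combination Complex.exp (l * x) * Complex.cos x * (x^2 * h2 + x * h1 + h0)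
  rw [intervalIntegral.integral_eq_sub_of_hasDerivAt (fun x _ => hH x)
    (by apply Continuous.intervalIntegrable; unfold phiF; fun_prop)]
  simp only [H, hl]
  rw [show 1 + l^2 = D by rw [hDe]; ring]
  simp
  rw [eq_div_iff (pow_ne_zero 3 hD)]
  have e2 : a2 = -3/2/D := by field_simp; linear_combination 2 * h2
  have e1 : a1 = (3 * π / 2 + 2 * l - 4 * l * a2)/D := by field_simp; linear_combination 2 * h1
  have e0 : a0 = (2 - l * π - 2 * l * a1 - 2 * a2)/D := by field_simp; linear_combination h0
  rw [e0, e1, e2]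
  field_simp
  rw [hDe]
  ring

lemma bound_aux (n : ℤ) : ‖(n:ℝ) * (4 * (n:ℝ)^2 - 13) / (1 - 4 * (n:ℝ)^2)^3‖ ≤ 1 / (n:ℝ)^2 := by
  rcases eq_or_ne n 0 with rfl | hn
  · simp
  have h1 : (1:ℝ) ≤ |(n:ℝ)| := by exact_mod_cast Int.one_le_abs hn
  rw [norm_div, norm_mul, norm_pow]
  simp only [Real.norm_eq_abs]
  rw [← sq_abs (n:ℝ)]
  set m := |(n:ℝ)|
  have hm : 1 ≤ m^2 := by nlinarith
  have hA : |4 * m^2 - 13| ≤ 13 * m^2 := by rw [abs_le]; constructor <;> nlinarith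
  have hB : 3 * m^2 ≤ |1 - 4 * m^2| := by rw [abs_sub_comm]; exact le_trans (by nlinarith) (le_abs_self _)
  have hB3 : (3 * m^2)^3 ≤ |1 - 4 * m^2|^3 := by gcongr
  have hp : 0 < (3 * m^2)^3 := by positivity
  rw [div_le_div_iff₀ (by linarith) (by positivity)]
  calc m * |4 * m^2 - 13| * m^2 ≤ m * (13 * m^2) * m^2 := by gcongr
    _ = 13 * (m^4 * m) := by ring
    _ ≤ 13 * (m^4 * m^2) := by gcongr; nlinarith
    _ ≤ (3 * m^2)^3 := by nlinarith [pow_pos (by linarith : 0 < m) 6]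
    _ ≤ _ := by linarith

lemma summable_aux : Summable (fun n : ℤ => (n:ℝ) * (4 * (n:ℝ)^2 - 13) / (1 - 4 * (n:ℝ)^2)^3) :=
  Summable.of_norm_bounded (Real.summable_one_div_int_pow.mpr one_lt_two) bound_aux

lemma coeff_aux (n : ℤ) : fourierCoeffOn (lt_add_of_pos_right (0:ℝ) Real.pi_pos)
    (fun x => (phiF x : ℂ)) n =
    (4 / π * -Complex.I) * (((n:ℝ) * (4 * (n:ℝ)^2 - 13) / (1 - 4 * (n:ℝ)^2)^3 : ℝ) : ℂ) := by
  have hpi : (π:ℂ) ≠ 0 := by exact_mod_cast Real.pi_ne_zero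
  have hI := Complex.I_sq
  have hl2 : (-2 * Complex.I * n)^2 = -4 * (n:ℂ)^2 := by
    linear_combination 4 * (n:ℂ)^2 * hI
  have hne : (1 - 4 * (n:ℂ)^2) ≠ 0 := by exact_mod_cast one_sub_ne n
  have key := integral_aux (-2 * Complex.I * n) (by rw [hl2]; convert hne using 1; ring)
    (by rw [Complex.exp_eq_one_iff]; exact ⟨-n, by push_cast; ring⟩)
  rw [fourierCoeffOn_eq_integral]
  have : ∀ x : ℝ, fourier (-n) (x : AddCircle (0 + π - 0)) • (phiF x : ℂ) =
      Complex.exp (-2 * Complex.I * n * x) * (phiF x : ℂ) := by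
    intro x
    rw [fourier_coe_apply, smul_eq_mul]
    congr 2
    push_cast
    field_simp
    ring
  simp only [this]
  rw [zero_add, key, hl2, Complex.real_smul, show (1 + -4 * (n:ℂ)^2) = 1 - 4 * (n:ℂ)^2 by ring]
  push_cast
  field_simp
  ring

lemma hasSum_aux {x : ℝ} (hx : x ∈ Icc 0 π) :
    HasSum (fun k : ℕ => phiCoeff (k + 1) * Real.sin (2 * ((k:ℝ) + 1) * x)) (π / 4 * phiF x) := by
  have hpi : (π:ℂ) ≠ 0 := by exact_mod_cast Real.pi_ne_zero
  have : Fact (0 < π) := ⟨Real.pi_pos⟩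
  suffices H : ∀ x ∈ Ico 0 π, HasSum (fun k : ℕ => phiCoeff (k + 1) * Real.sin (2 * ((k:ℝ) + 1) * x)) (π / 4 * phiF x) by
    rcases hx.2.lt_or_eq with h | rfl
    · exact H x ⟨hx.1, h⟩
    · convert hasSum_zero using 1
      · ext k
        have := Real.sin_nat_mul_pi (2 * (k + 1))
        push_cast at this
        simp [this]
      · simp [phiF]
  intro x hx
  let f : C(AddCircle π, ℂ) := ⟨AddCircle.liftIco π 0 (fun x => (phiF x : ℂ)),
    AddCircle.liftIco_continuous (by simp [phiF]) (by unfold phiF; fun_prop)⟩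
  have hc : ∀ n, fourierCoeff f n = (4 / π * -Complex.I) *
      (((n:ℝ) * (4 * (n:ℝ)^2 - 13) / (1 - 4 * (n:ℝ)^2)^3 : ℝ) : ℂ) := fun n => by
    rw [← coeff_aux]; exact fourierCoeff_liftIco_eq _ n
  have hs : Summable (fourierCoeff f) := by
    rw [funext hc]
    exact (Complex.summable_ofReal.mpr summable_aux).mul_left _
  have h1 := (has_pointwise_sum_fourier_series_of_summable hs (x : AddCircle π)).nat_add_neg
  have hfx : f (x : AddCircle π) = (phiF x : ℂ) :=
    AddCircle.liftIco_zero_coe_apply (f := fun x => (phiF x : ℂ)) hx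
  simp only [hc, hfx] at h1
  rw [← hasSum_nat_add_iff' 1] at h1
  rw [← Complex.hasSum_ofReal]
  convert! h1.mul_left (π / 4 : ℂ) using 1
  · ext k
    have hne : (1 - 4 * ((k:ℂ) + 1)^2) ≠ 0 := by exact_mod_cast one_sub_ne (k + 1)
    simp only [fourier_coe_apply, phiCoeff, smul_eq_mul]
    push_cast
    rw [show 2 * (π:ℂ) * Complex.I * ((k:ℂ) + 1) * x / π = (2 * ((k:ℂ) + 1) * x) * Complex.I by field_simp,
      show 2 * (π:ℂ) * Complex.I * -((k:ℂ) + 1) * x / π = -(2 * ((k:ℂ) + 1) * x) * Complex.I by field_simp,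
      Complex.sin, neg_sq]
    field_simp
    ring
  · simp

lemma Phi10_eq {x : ℝ} (hx : x ∈ Icc 0 π) : Phi10 x = phiF x := by
  rw [Phi10, (hasSum_aux hx).tsum_eq]
  field_simp

lemma phiF_deriv : deriv phiF = fun x => (2 + 3 / 2 * (x * (π - x)) * (-1)) * Real.sin x +
    ((2 * x - π) + 3 / 2 * (π - 2 * x)) * Real.cos x := by
  ext x
  have i := hasDerivAt_id x
  have := (((i.const_mul 2).sub_const π).mul (Real.hasDerivAt_sin x)).add
    (((i.mul (i.const_sub π)).const_mul (3/2)).mul (Real.hasDerivAt_cos x))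
  refine (HasDerivAt.congr_deriv this ?_).deriv
  simp
  ring

lemma phiF_deriv2 (x : ℝ) : deriv (deriv phiF) x + phiF x =
    Real.cos x - 3 * (π - 2*x) * Real.sin x := by
  rw [phiF_deriv]
  have i := hasDerivAt_id x
  have := (((((i.mul (i.const_sub π)).const_mul (3/2)).mul_const (-1)).const_add 2).mul
    (Real.hasDerivAt_sin x)).add
    ((((i.const_mul 2).sub_const π).add (((i.const_mul 2).const_sub π).const_mul (3/2))).mul
      (Real.hasDerivAt_cos x))
  have h2 : deriv (fun x => (2 + 3 / 2 * (x * (π - x)) * (-1)) * Real.sin x +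
    ((2 * x - π) + 3 / 2 * (π - 2 * x)) * Real.cos x) x = _ := HasDerivAt.deriv this
  rw [h2]
  simp [phiF]
  ring

lemma phiF_integral : ∫ x in (0:ℝ)..π, phiF x * Real.sin x = 0 := by
  have h := intervalIntegral.integral_comp_sub_left (a := 0) (b := π)
    (fun x => phiF x * Real.sin x) π
  have h2 : ∀ x, phiF (π - x) * Real.sin (π - x) = -(phiF x * Real.sin x) := by
    intro x
    simp [phiF]
    ring
  simp only [h2, intervalIntegral.integral_neg, sub_self, sub_zero] at h
  linarith

lemma summable_phi (x : ℝ) :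
    Summable (fun k : ℕ => phiCoeff (k + 1) * Real.sin (2 * ((k:ℝ) + 1) * x)) := by
  have h := ((summable_aux.norm.comp_injective
    (Nat.cast_injective.comp (add_left_injective 1) : Function.Injective
      (fun k : ℕ => ((k + 1 : ℕ) : ℤ)))).mul_left 2)
  refine Summable.of_norm_bounded h fun k => ?_
  have e : phiCoeff (k + 1) = 2 * ((((k + 1 : ℕ) : ℤ) : ℝ) * (4 * (((k + 1 : ℕ) : ℤ) : ℝ)^2 - 13) /
      (1 - 4 * (((k + 1 : ℕ) : ℤ) : ℝ)^2)^3) := by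
    simp only [phiCoeff]
    push_cast
    ring
  rw [e, norm_mul, norm_mul]
  simp only [Function.comp]
  have := Real.abs_sin_le_one (2 * ((k:ℝ) + 1) * x)
  rw [← Real.norm_eq_abs] at this
  refine (mul_le_of_le_one_right (by positivity) this).trans ?_
  simp

/-- The series defining `Φ₁₀` converges, `Φ₁₀` is `C²` on `[0,π]`,
vanishes at the endpoints, is orthogonal to `sin` on `(0,π)`, and solves
`Φ₁₀'' + Φ₁₀ = cos x − 3(π − 2x) sin x` on `(0,π)`. -/
theorem Phi10_properties :
    (∀ x : ℝ, Summable (fun k : ℕ => phiCoeff (k + 1) * Real.sin (2 * ((k:ℝ) + 1) * x))) ∧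
    ContDiffOn ℝ 2 Phi10 (Set.Icc 0 π) ∧
    Phi10 0 = 0 ∧ Phi10 π = 0 ∧
    (∫ x in (0:ℝ)..π, Phi10 x * Real.sin x) = 0 ∧
    (∀ x ∈ Set.Ioo (0:ℝ) π,
      deriv (deriv Phi10) x + Phi10 x = Real.cos x - 3 * (π - 2*x) * Real.sin x) := by
  have heq : EqOn Phi10 phiF (Icc 0 π) := fun x hx => Phi10_eq hx
  refine ⟨summable_phi, ?_, ?_, ?_, ?_, ?_⟩
  · refine ContDiffOn.congr (ContDiff.contDiffOn (f := phiF) ?_) heq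
    unfold phiF
    fun_prop
  · rw [heq ⟨le_rfl, Real.pi_pos.le⟩]; simp [phiF]
  · rw [heq ⟨Real.pi_pos.le, le_rfl⟩]; simp [phiF]
  · refine Eq.trans ?_ phiF_integral
    apply intervalIntegral.integral_congr
    intro x hx
    rw [uIcc_of_le Real.pi_pos.le] at hx
    simp only [heq hx]
  · intro x hx
    have h : Phi10 =ᶠ[nhds x] phiF :=
      heq.eventuallyEq_of_mem (Icc_mem_nhds hx.1 hx.2)
    rw [h.deriv.deriv_eq, h.eq_of_nhds, phiF_deriv2]

end
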